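/- A system with an n-useful, or an (n−1)-useful, generalized failure detector can be converted to a system with a perfect standard failure detector; conversely, a system with a perfect standard failure detector can be converted to a system with an n-useful (and hence (n−1)-useful) generalized failure detector. Moreover, if suspect_p(S,k) is an (n−1)-useful or n-useful failure-detector event, then |S| = k. -/

import Mathlib

/-! # Model: asynchronous message-passing systems with crash failures and
failure detectors (Halpern–Ricciardi). -/

/-- Events at a process: `send q msg`, `recv q msg` (peer `q`), `crash`,
`doAct α`, `initAct α`, and failure-detector events `suspect x` with report `x : FD`. -/
inductive Event (n : ℕ) (Msg Act FD : Type) where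
  | send    : Fin n → Msg → Event n Msg Act FD
  | recv    : Fin n → Msg → Event n Msg Act FD
  | crash   : Event n Msg Act FD
  | doAct   : Act → Event n Msg Act FD
  | initAct : Act → Event n Msg Act FD
  | suspect : FD → Event n Msg Act FD
  deriving DecidableEq

/-- A history is a finite sequence of events (oldest first). -/
abbrev History (n : ℕ) (Msg Act FD : Type) := List (Event n Msg Act FD)

/-- A run assigns to each time a cut, i.e. a history for each process. -/
abbrev Run (n : ℕ) (Msg Act FD : Type) := ℕ → Fin n → History n Msg Act FD

/-- Runs with standard failure-detector reports (sets of suspected processes). -/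
abbrev StdRun (n : ℕ) (Msg Act : Type) := Run n Msg Act (Finset (Fin n))

/-- Runs with generalized failure-detector reports `(S, k)`. -/
abbrev GenRun (n : ℕ) (Msg Act : Type) := Run n Msg Act (Finset (Fin n) × ℕ)

section Model

variable {n : ℕ} {Msg Act FD FD' : Type}
variable [DecidableEq Msg] [DecidableEq Act] [DecidableEq FD] [DecidableEq FD']

/-- Conditions R1–R5 on runs (R5 is fairness of communication). -/
def IsRun (r : Run n Msg Act FD) : Prop :=
  (∀ p, r 0 p = []) ∧
  (∀ p m, r (m+1) p = r m p ∨ ∃ e, r (m+1) p = r m p ++ [e]) ∧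
  (∀ p q msg m, Event.recv p msg ∈ r m q → Event.send q msg ∈ r m p) ∧
  (∀ p m, Event.crash ∈ r m p → ∃ h, r m p = h ++ [Event.crash]) ∧
  (∀ p q msg,
      (∀ N, ∃ m, N ≤ (r m p).count (Event.send q msg)) →
      (∃ m, Event.crash ∈ r m q) ∨
        (∀ N, ∃ m, N ≤ (r m q).count (Event.recv p msg)))

/-- Process `q` is faulty in run `r` iff `crash` is in `q`'s history. -/
def Faulty (r : Run n Msg Act FD) (q : Fin n) : Prop := ∃ m, Event.crash ∈ r m q

open Classical in
/-- `F(r)`: the set of faulty processes of run `r`. -/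
noncomputable def faultySet (r : Run n Msg Act FD) : Finset (Fin n) :=
  Finset.univ.filter (fun q => Faulty r q)

/-- Communication is reliable in `r`: every message sent by `p` to a process `q`
that never crashes is eventually received by `q` (count-wise). -/
def ReliableComm (r : Run n Msg Act FD) : Prop :=
  ∀ p q msg, ¬ Faulty r q →
    ∀ m, ∃ m', (r m p).count (Event.send q msg) ≤ (r m' q).count (Event.recv p msg)

/-- No failure-detector events occur in `r`. -/
def NoFDEvents (r : Run n Msg Act FD) : Prop :=
  ∀ p m x, Event.suspect x ∉ r m p

/-! ## Standard failure detectors -/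

/-- `Suspects_p(r,m)`: the report of the most recent failure-detector event in
`r_p(m)`, and `∅` if there is none. -/
def Suspects (r : StdRun n Msg Act) (p : Fin n) (m : ℕ) : Finset (Fin n) :=
  (r m p).foldl (fun acc e => match e with | Event.suspect S => S | _ => acc) ∅

/-- Strong accuracy: no process is suspected before it crashes. -/
def StrongAccuracyRun (r : StdRun n Msg Act) : Prop :=
  ∀ p q m, q ∈ Suspects r p m → Event.crash ∈ r m q

/-- Weak accuracy: if some process is correct, some correct process is never suspected. -/
def WeakAccuracyRun (r : StdRun n Msg Act) : Prop :=
  faultySet r ≠ Finset.univ →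
    ∃ q, ¬ Faulty r q ∧ ∀ p m, q ∉ Suspects r p m

/-- Strong completeness: every faulty process is eventually permanently suspected
by every correct process. -/
def StrongCompletenessRun (r : StdRun n Msg Act) : Prop :=
  ∀ p q, Faulty r q → ¬ Faulty r p → ∃ m, ∀ m' ≥ m, q ∈ Suspects r p m'

/-- Weak completeness. -/
def WeakCompletenessRun (r : StdRun n Msg Act) : Prop :=
  ∀ q, Faulty r q → faultySet r ≠ Finset.univ →
    ∃ p, ¬ Faulty r p ∧ ∃ m, ∀ m' ≥ m, q ∈ Suspects r p m'

/-- Impermanent strong completeness. -/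
def ImpStrongCompletenessRun (r : StdRun n Msg Act) : Prop :=
  ∀ p q, Faulty r q → ¬ Faulty r p → ∃ m, q ∈ Suspects r p m

/-- Impermanent weak completeness. -/
def ImpWeakCompletenessRun (r : StdRun n Msg Act) : Prop :=
  ∀ q, Faulty r q → faultySet r ≠ Finset.univ →
    ∃ p m, ¬ Faulty r p ∧ q ∈ Suspects r p m

/-! ## Generalized failure detectors -/

/-- `suspect_p(S,k)` is a `t`-useful failure-detector event for run `r`:
`F(r) ⊆ S`, `n - |S| > min(t,n-1) - k` (stated additively to avoid truncated
subtraction), and `k ≤ |S|`. -/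
def TUsefulEvent (t : ℕ) (r : GenRun n Msg Act) (S : Finset (Fin n)) (k : ℕ) : Prop :=
  faultySet r ⊆ S ∧ n + k > S.card + min t (n - 1) ∧ k ≤ S.card

/-- Generalized strong accuracy. -/
def GenAccuracyRun (r : GenRun n Msg Act) : Prop :=
  ∀ p m (S : Finset (Fin n)) k, Event.suspect (S, k) ∈ r m p →
    ∃ S' ⊆ S, S'.card = k ∧ ∀ q ∈ S', Event.crash ∈ r m q

/-- Generalized impermanent strong completeness (w.r.t. bound `t`). -/
def GenCompletenessRun (t : ℕ) (r : GenRun n Msg Act) : Prop :=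
  ∀ p, ¬ Faulty r p →
    ∃ m, ∃ S : Finset (Fin n), ∃ k, Event.suspect (S, k) ∈ r m p ∧ TUsefulEvent t r S k

/-! ## Protocols, contexts, and generated systems -/

/-- A joint protocol: for each process, a function from finite histories to actions
(identified with the corresponding events). -/
abbrev JointProtocol (n : ℕ) (Msg Act FD : Type) :=
  Fin n → History n Msg Act FD → Event n Msg Act FD

/-- Protocol events: sends and internal (`do`/`init`) events; receives, crashes
and failure-detector events are due to the environment. -/
def IsProtocolEvent : Event n Msg Act FD → Prop
  | Event.send _ _  => True
  | Event.doAct _   => True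
  | Event.initAct _ => True
  | _ => False

/-- A run is consistent with a joint protocol. -/
def Consistent (P : JointProtocol n Msg Act FD) (r : Run n Msg Act FD) : Prop :=
  ∀ p m e, r (m+1) p = r m p ++ [e] → IsProtocolEvent e → e = P p (r m p)

/-- `init_p(α)` may appear only in `p = owner α`'s history and at most once per run. -/
def InitOK (ow : Act → Fin n) (r : Run n Msg Act FD) : Prop :=
  ∀ p m α, Event.initAct α ∈ r m p →
    ow α = p ∧ (r m p).count (Event.initAct α) ≤ 1

/-- The system generated by joint protocol `P` in context `C` (a context is
identified with the set of runs satisfying its constraints): all runs satisfying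
R1–R5, the `init` constraints, and the constraints of the context, that are
consistent with the protocol. -/
def Generated (ow : Act → Fin n) (C : Set (Run n Msg Act FD))
    (P : JointProtocol n Msg Act FD) : Set (Run n Msg Act FD) :=
  {r | IsRun r ∧ InitOK ow r ∧ r ∈ C ∧ Consistent P r}

/-! ## UDC and nUDC -/

/-- UDC of action `α` owned by `p` in system `R` (conditions DC1–DC3). -/
def UDCof (R : Set (Run n Msg Act FD)) (p : Fin n) (α : Act) : Prop :=
  (∀ r ∈ R, ∀ m, Event.initAct α ∈ r m p →
      ∃ m' ≥ m, Event.doAct α ∈ r m' p ∨ Event.crash ∈ r m' p) ∧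
  (∀ r ∈ R, ∀ q₁ q₂ m, Event.doAct α ∈ r m q₁ →
      ∃ m' ≥ m, Event.doAct α ∈ r m' q₂ ∨ Event.crash ∈ r m' q₂) ∧
  (∀ r ∈ R, ∀ q m, Event.doAct α ∈ r m q → Event.initAct α ∈ r m p)

/-- nUDC of action `α` owned by `p` (conditions DC1, DC2', DC3). -/
def NUDCof (R : Set (Run n Msg Act FD)) (p : Fin n) (α : Act) : Prop :=
  (∀ r ∈ R, ∀ m, Event.initAct α ∈ r m p →
      ∃ m' ≥ m, Event.doAct α ∈ r m' p ∨ Event.crash ∈ r m' p) ∧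
  (∀ r ∈ R, ∀ q₁ q₂ m, Event.doAct α ∈ r m q₁ →
      ∃ m' ≥ m, Event.doAct α ∈ r m' q₂ ∨ Event.crash ∈ r m' q₂ ∨
        Event.crash ∈ r m' q₁) ∧
  (∀ r ∈ R, ∀ q m, Event.doAct α ∈ r m q → Event.initAct α ∈ r m p)

/-- `R` attains UDC: UDC of every coordination action. -/
def AttainsUDC (ow : Act → Fin n) (R : Set (Run n Msg Act FD)) : Prop :=
  ∀ α, UDCof R (ow α) α

/-- `R` attains nUDC: nUDC of every coordination action. -/
def AttainsNUDC (ow : Act → Fin n) (R : Set (Run n Msg Act FD)) : Prop :=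
  ∀ α, NUDCof R (ow α) α

/-! ## Conversions between systems -/

/-- Re-tag a non-failure-detector event; failure-detector events are dropped. -/
def mapNonFD : Event n Msg Act FD → Option (Event n Msg Act FD')
  | Event.send q msg => some (Event.send q msg)
  | Event.recv q msg => some (Event.recv q msg)
  | Event.crash => some Event.crash
  | Event.doAct a => some (Event.doAct a)
  | Event.initAct a => some (Event.initAct a)
  | Event.suspect _ => none

/-- `f` converts system `R` to system `R'`: `R' = f '' R`, each `f r` is a run,
and all events of `r` except possibly failure-detector events appear in `f r`
in the same order as in `r` (with possibly additional events). -/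
def IsConversion (f : Run n Msg Act FD → Run n Msg Act FD')
    (R : Set (Run n Msg Act FD)) (R' : Set (Run n Msg Act FD')) : Prop :=
  R' = f '' R ∧
  ∀ r ∈ R, IsRun (f r) ∧
    ∀ p m, ∃ m',
      ((r m p).filterMap (mapNonFD (FD' := Unit))).Sublist
        ((f r m' p).filterMap (mapNonFD (FD' := Unit)))


/-- Accumulating-union transformation of a single history: each failure-detector
event is replaced by one reporting the union of all processes suspected so far. -/
def unionHist : Finset (Fin n) → History n Msg Act (Finset (Fin n)) →
    History n Msg Act (Finset (Fin n))
  | _, [] => []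
  | acc, Event.suspect S :: rest => Event.suspect (acc ∪ S) :: unionHist (acc ∪ S) rest
  | acc, e :: rest => e :: unionHist acc rest

/-- The conversion that always outputs the union of all previously suspected
processes. -/
def unionConvert (r : StdRun n Msg Act) : StdRun n Msg Act :=
  fun m p => unionHist ∅ (r m p)

/-! ## Knowledge and temporal semantics (shallow embedding) -/

/-- `(R,r,m) ⊨ K_p φ`. -/
def Knows (R : Set (Run n Msg Act FD)) (p : Fin n)
    (φ : Run n Msg Act FD → ℕ → Prop) (r : Run n Msg Act FD) (m : ℕ) : Prop :=
  ∀ r' ∈ R, ∀ m', r' m' p = r m p → φ r' m'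

/-- `(R,r,m) ⊨ □φ`. -/
def AlwaysP (φ : Run n Msg Act FD → ℕ → Prop) (r : Run n Msg Act FD) (m : ℕ) : Prop :=
  ∀ m' ≥ m, φ r m'

/-- `(R,r,m) ⊨ ◇φ`. -/
def EventuallyP (φ : Run n Msg Act FD → ℕ → Prop) (r : Run n Msg Act FD) (m : ℕ) : Prop :=
  ∃ m' ≥ m, φ r m'

/-- `φ` is stable in `R`: once true, it remains true. -/
def StableIn (R : Set (Run n Msg Act FD)) (φ : Run n Msg Act FD → ℕ → Prop) : Prop :=
  ∀ r ∈ R, ∀ m, φ r m → ∀ m' ≥ m, φ r m'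

/-- `φ` is local to `p` in `R`: at every point, `p` knows whether `φ` holds. -/
def LocalTo (R : Set (Run n Msg Act FD)) (p : Fin n)
    (φ : Run n Msg Act FD → ℕ → Prop) : Prop :=
  ∀ r ∈ R, ∀ m, Knows R p φ r m ∨ Knows R p (fun r' m' => ¬ φ r' m') r m

/-- `φ` is insensitive to failure by `q` in `R`. -/
def Insensitive (R : Set (Run n Msg Act FD)) (q : Fin n)
    (φ : Run n Msg Act FD → ℕ → Prop) : Prop :=
  ∀ r ∈ R, ∀ r' ∈ R, ∀ m m', r' m' q = r m q ++ [Event.crash] →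
    (φ r m ↔ φ r' m')

/-- Run `r'` extends the point `(r,m)`. -/
def Extends (r' r : Run n Msg Act FD) (m : ℕ) : Prop :=
  ∀ m' ≤ m, ∀ p, r' m' p = r m' p

/-! ## Conditions A1–A5 -/

/-- A1: failures are independent of other events. -/
def CondA1 (R : Set (Run n Msg Act FD)) : Prop :=
  ∀ S : Finset (Fin n),
    (∃ rS ∈ R, ∀ q ∈ S, Faulty rS q) →
    ∀ r ∈ R, ∀ m, (∀ q, q ∉ S → Event.crash ∉ r m q) →
      ∃ r' ∈ R, Extends r' r m ∧ faultySet r' = S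

/-- A2. -/
def CondA2 (R : Set (Run n Msg Act FD)) : Prop :=
  ∀ r₁ ∈ R, ∀ r₂ ∈ R, ∀ m : ℕ, faultySet r₁ = faultySet r₂ →
    (∀ q, q ∉ faultySet r₁ → r₁ m q = r₂ m q) →
    ∃ r₁' ∈ R, ∃ r₂' ∈ R, Extends r₁' r₁ m ∧ Extends r₂' r₂ m ∧
      (∀ q ∈ faultySet r₁, Event.crash ∈ r₁' (m+1) q ∧ Event.crash ∈ r₂' (m+1) q) ∧
      (∀ m' ≥ m, ∀ q, q ∉ faultySet r₁ → r₁' m' q = r₂' m' q)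

/-- A3: `K_q init_p(α)` is insensitive to failure by `q`. -/
def CondA3 (ow : Act → Fin n) (R : Set (Run n Msg Act FD)) : Prop :=
  ∀ (p q : Fin n) (α : Act), ow α = p →
    Insensitive R q
      (fun r m => Knows R q (fun r' m' => Event.initAct α ∈ r' m' p) r m)

/-- A4. -/
def CondA4 (R : Set (Run n Msg Act FD)) : Prop :=
  ∀ (φ : Run n Msg Act FD → ℕ → Prop) (p : Fin n),
    StableIn R φ → LocalTo R p φ → Insensitive R p φ →
    ∀ r ∈ R, ∀ m : ℕ, ∀ S : Finset (Fin n), S.Nonempty →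
      (∀ q ∈ S, ¬ Knows R q φ r m) →
      ∃ r' ∈ R,
        (∀ q ∈ S, r' m q = r m q) ∧
        (∀ q, q ∉ S → ∃ h, h <+: r m q ∧
          (r' m q = h ∨ (r' m q = h ++ [Event.crash] ∧ Event.crash ∈ r m q))) ∧
        ¬ φ r' m

/-- A5ₜ: every set of at most `t` processes is exactly the faulty set of some run. -/
def CondA5 (R : Set (Run n Msg Act FD)) (t : ℕ) : Prop :=
  ∀ S : Finset (Fin n), S.card ≤ t → ∃ rS ∈ R, faultySet rS = S

/-! ## The simulations R^f and R^{f'} -/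

open Classical in
/-- The set of processes that `p` knows (in `R` at `(r,m)`) to have crashed. -/
noncomputable def KCrashSet (R : Set (Run n Msg Act FD)) (r : Run n Msg Act FD)
    (m : ℕ) (p : Fin n) : Finset (Fin n) :=
  Finset.univ.filter (fun q => Knows R p (fun r' m' => Event.crash ∈ r' m' q) r m)

/-- `p`'s history in `f(r)` (conditions P1–P3): at odd times the new failure
detector reports the processes `p` knows to have crashed; at even times the
next non-failure-detector event of `r` (if any) is appended. -/
noncomputable def fHist (R : Set (Run n Msg Act FD)) (r : Run n Msg Act FD)
    (p : Fin n) : ℕ → History n Msg Act (Finset (Fin n))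
  | 0 => []
  | (m+1) =>
    if m % 2 = 0 then
      fHist R r p m ++ [Event.suspect (KCrashSet R r (m/2) p)]
    else
      fHist R r p m ++ ((r (m/2 + 1) p).drop ((r (m/2) p).length)).filterMap mapNonFD

/-- The run `f(r)`. -/
noncomputable def fRun (R : Set (Run n Msg Act FD)) (r : Run n Msg Act FD) :
    StdRun n Msg Act :=
  fun m p => fHist R r p m

/-- The system `R^f = {f(r) : r ∈ R}`. -/
noncomputable def RfSystem (R : Set (Run n Msg Act FD)) : Set (StdRun n Msg Act) :=
  fRun R '' R

open Classical in
/-- The largest `k'` such that at every point with the same local history for `p`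
as `(r,m)`, at least `k'` processes of `S` have crashed. -/
noncomputable def kMax (R : Set (Run n Msg Act FD)) (r : Run n Msg Act FD)
    (m : ℕ) (p : Fin n) (S : Finset (Fin n)) : ℕ :=
  sSup {k' : ℕ | ∀ r'' ∈ R, ∀ m'', r'' m'' p = r m p →
    k' ≤ (S.filter (fun q => Event.crash ∈ r'' m'' q)).card}

/-- `p`'s history in `f'(r)` (conditions P1, P2, P3'), relative to an enumeration
`enum` of the subsets of `Proc`. -/
noncomputable def f'Hist (R : Set (Run n Msg Act FD)) (enum : ℕ → Finset (Fin n))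
    (r : Run n Msg Act FD) (p : Fin n) : ℕ → History n Msg Act (Finset (Fin n) × ℕ)
  | 0 => []
  | (m+1) =>
    if m % 2 = 0 then
      f'Hist R enum r p m ++
        [Event.suspect (enum ((r (m/2 + 1) p).length % 2 ^ n),
          kMax R r (m/2) p (enum ((r (m/2 + 1) p).length % 2 ^ n)))]
    else
      f'Hist R enum r p m ++ ((r (m/2 + 1) p).drop ((r (m/2) p).length)).filterMap mapNonFD

/-- The run `f'(r)`. -/
noncomputable def f'Run (R : Set (Run n Msg Act FD)) (enum : ℕ → Finset (Fin n))
    (r : Run n Msg Act FD) : GenRun n Msg Act :=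
  fun m p => f'Hist R enum r p m

/-- The system `R^{f'} = {f'(r) : r ∈ R}`. -/
noncomputable def Rf'System (R : Set (Run n Msg Act FD)) (enum : ℕ → Finset (Fin n)) :
    Set (GenRun n Msg Act) :=
  f'Run R enum '' R

/-- Infinitely many `init` events appear in `r`. -/
def InfInits (r : Run n Msg Act FD) : Prop :=
  ∀ N, ∃ m, N ≤ ∑ p, (r m p).countP (fun e => match e with | Event.initAct _ => true | _ => false)

end Model
section Helpers

variable {n : ℕ} {Msg Act FD FD' FD'' : Type}

/-- The non-failure-detector part of a history. -/
def core (l : History n Msg Act FD) : History n Msg Act Unit :=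
  l.filterMap (mapNonFD (FD' := Unit))

theorem sublist_of_eq' {α : Type} {l l' : List α} (h : l = l') : l.Sublist l' := by
  rw [h]

theorem mem_core_send (l : History n Msg Act FD) (q : Fin n) (msg : Msg) :
    Event.send q msg ∈ core l ↔ Event.send q msg ∈ l := by
  unfold core
  rw [List.mem_filterMap]
  constructor
  · rintro ⟨a, ha, h⟩
    cases a <;> simp_all [mapNonFD]
  · intro h
    exact ⟨_, h, rfl⟩

theorem mem_core_recv (l : History n Msg Act FD) (q : Fin n) (msg : Msg) :
    Event.recv q msg ∈ core l ↔ Event.recv q msg ∈ l := by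
  unfold core
  rw [List.mem_filterMap]
  constructor
  · rintro ⟨a, ha, h⟩
    cases a <;> simp_all [mapNonFD]
  · intro h
    exact ⟨_, h, rfl⟩

theorem mem_core_crash (l : History n Msg Act FD) :
    Event.crash ∈ core l ↔ Event.crash ∈ l := by
  unfold core
  rw [List.mem_filterMap]
  constructor
  · rintro ⟨a, ha, h⟩
    cases a <;> simp_all [mapNonFD]
  · intro h
    exact ⟨_, h, rfl⟩

theorem count_core_send [DecidableEq Msg] [DecidableEq Act] [DecidableEq FD]
    (l : History n Msg Act FD) (q : Fin n) (msg : Msg) :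
    (core l).count (Event.send q msg) = l.count (Event.send q msg) := by
  induction l with
  | nil => rfl
  | cons a l ih =>
    unfold core at ih ⊢
    cases a <;> simp [List.filterMap_cons, mapNonFD, List.count_cons, ih]

theorem count_core_recv [DecidableEq Msg] [DecidableEq Act] [DecidableEq FD]
    (l : History n Msg Act FD) (q : Fin n) (msg : Msg) :
    (core l).count (Event.recv q msg) = l.count (Event.recv q msg) := by
  induction l with
  | nil => rfl
  | cons a l ih =>
    unfold core at ih ⊢
    cases a <;> simp [List.filterMap_cons, mapNonFD, List.count_cons, ih]

/-- History transformations that only alter failure-detector reports. -/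
structure GoodHist (g : History n Msg Act FD → History n Msg Act FD') : Prop where
  nil : g [] = []
  snoc : ∀ l e, ∃ e', g (l ++ [e]) = g l ++ [e']
  snoc_crash : ∀ l, g (l ++ [Event.crash]) = g l ++ [Event.crash]
  core_eq : ∀ l, core (g l) = core l

theorem GoodHist.comp {g : History n Msg Act FD → History n Msg Act FD'}
    {g' : History n Msg Act FD' → History n Msg Act FD''}
    (h' : GoodHist g') (h : GoodHist g) : GoodHist (fun l => g' (g l)) where
  nil := by rw [h.nil, h'.nil]
  snoc l e := by
    obtain ⟨e', he⟩ := h.snoc l e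
    obtain ⟨e'', he'⟩ := h'.snoc (g l) e'
    exact ⟨e'', by rw [he, he']⟩
  snoc_crash l := by rw [h.snoc_crash, h'.snoc_crash]
  core_eq l := by rw [h'.core_eq, h.core_eq]

theorem GoodHist.crash_iff {g : History n Msg Act FD → History n Msg Act FD'}
    (h : GoodHist g) (l : History n Msg Act FD) : Event.crash ∈ g l ↔ Event.crash ∈ l := by
  rw [← mem_core_crash, h.core_eq, mem_core_crash]

theorem GoodHist.isRun [DecidableEq Msg] [DecidableEq Act] [DecidableEq FD] [DecidableEq FD']
    {g : History n Msg Act FD → History n Msg Act FD'}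
    (h : GoodHist g) {r : Run n Msg Act FD} (hr : IsRun r) :
    IsRun (fun m p => g (r m p)) := by
  obtain ⟨h1, h2, h3, h4, h5⟩ := hr
  refine ⟨?_, ?_, ?_, ?_, ?_⟩
  · intro p
    simp only [h1, h.nil]
  · intro p m
    rcases h2 p m with h' | ⟨e, he⟩
    · left
      simp only [h']
    · right
      simp only [he]
      exact h.snoc _ _
  · intro p q msg m hm
    rw [← mem_core_recv, h.core_eq, mem_core_recv] at hm
    rw [← mem_core_send, h.core_eq, mem_core_send]
    exact h3 p q msg m hm
  · intro p m hm
    rw [h.crash_iff] at hm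
    obtain ⟨l, hl⟩ := h4 p m hm
    exact ⟨g l, by simp only [hl, h.snoc_crash]⟩
  · intro p q msg hm
    have hs : ∀ l, (g l).count (Event.send q msg) = l.count (Event.send q msg) := by
      intro l
      rw [← count_core_send, h.core_eq, count_core_send]
    have hv : ∀ l, (g l).count (Event.recv p msg) = l.count (Event.recv p msg) := by
      intro l
      rw [← count_core_recv, h.core_eq, count_core_recv]
    simp only [hs, hv, h.crash_iff] at hm ⊢
    exact h5 p q msg hm

/-- Start with an extra failure-detector event, delaying everything else by one. -/
def shiftRun (x : FD) (r : Run n Msg Act FD) : Run n Msg Act FD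
  | 0, _ => []
  | (m+1), p => Event.suspect x :: r m p

theorem shiftRun_isRun [DecidableEq Msg] [DecidableEq Act] [DecidableEq FD]
    (x : FD) {r : Run n Msg Act FD} (hr : IsRun r) : IsRun (shiftRun x r) := by
  obtain ⟨h1, h2, h3, h4, h5⟩ := hr
  refine ⟨fun _ => rfl, ?_, ?_, ?_, ?_⟩
  · intro p m
    cases m with
    | zero => right; exact ⟨Event.suspect x, by simp [shiftRun, h1]⟩
    | succ m =>
      rcases h2 p m with h' | ⟨e, he⟩
      · left; simp [shiftRun, h']
      · right; exact ⟨e, by simp [shiftRun, he]⟩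
  · intro p q msg m hm
    cases m with
    | zero => simp [shiftRun] at hm
    | succ m =>
      simp only [shiftRun, List.mem_cons, reduceCtorEq, false_or] at hm ⊢
      exact h3 p q msg m hm
  · intro p m hm
    cases m with
    | zero => simp [shiftRun] at hm
    | succ m =>
      simp only [shiftRun, List.mem_cons, reduceCtorEq, false_or] at hm ⊢
      obtain ⟨l, hl⟩ := h4 p m hm
      exact ⟨Event.suspect x :: l, by simp [hl]⟩
  · intro p q msg hm
    have key : ∀ N, ∃ m, N ≤ (r m p).count (Event.send q msg) := by
      intro N
      obtain ⟨m, hN⟩ := hm N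
      cases m with
      | zero => exact ⟨0, by simp [shiftRun] at hN; omega⟩
      | succ m => exact ⟨m, by simpa [shiftRun, List.count_cons] using hN⟩
    rcases h5 p q msg key with ⟨m, h⟩ | h
    · left; exact ⟨m+1, by simp [shiftRun, h]⟩
    · right
      intro N
      obtain ⟨m, hN⟩ := h N
      exact ⟨m+1, by simpa [shiftRun, List.count_cons] using hN⟩

/-- Apply a function to failure-detector reports. -/
def mapEv (c : FD → FD') : Event n Msg Act FD → Event n Msg Act FD'
  | Event.send q msg => Event.send q msg
  | Event.recv q msg => Event.recv q msg
  | Event.crash => Event.crash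
  | Event.doAct a => Event.doAct a
  | Event.initAct a => Event.initAct a
  | Event.suspect x => Event.suspect (c x)

theorem goodHist_map (c : FD → FD') :
    GoodHist (fun l : History n Msg Act FD => l.map (mapEv c)) where
  nil := rfl
  snoc l e := ⟨mapEv c e, by simp⟩
  snoc_crash l := by simp [mapEv]
  core_eq l := by
    unfold core
    rw [List.filterMap_map]
    congr 1
    funext e
    cases e <;> rfl

theorem suspect_mem_map (c : FD → FD') (l : History n Msg Act FD) (y : FD') :
    Event.suspect y ∈ l.map (mapEv c) ↔ ∃ x, Event.suspect x ∈ l ∧ c x = y := by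
  rw [List.mem_map]
  constructor
  · rintro ⟨a, ha, h⟩
    cases a <;> simp_all [mapEv]
    exact ⟨_, ha, h⟩
  · rintro ⟨x, hx, rfl⟩
    exact ⟨_, hx, rfl⟩

theorem goodHist_union : GoodHist (unionHist (n := n) (Msg := Msg) (Act := Act) ∅) where
  nil := rfl
  snoc l e := by
    generalize (∅ : Finset (Fin n)) = acc
    induction l generalizing acc with
    | nil => cases e <;> simp [unionHist]
    | cons a l ih => cases a <;> simpa [unionHist] using ih _
  snoc_crash l := by
    generalize (∅ : Finset (Fin n)) = acc
    induction l generalizing acc with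
    | nil => simp [unionHist]
    | cons a l ih => cases a <;> simpa [unionHist] using ih _
  core_eq l := by
    generalize (∅ : Finset (Fin n)) = acc
    unfold core
    induction l generalizing acc with
    | nil => simp [unionHist]
    | cons a l ih => cases a <;> simpa [unionHist, mapNonFD, List.filterMap_cons] using ih _

/-- The `Suspects` fold. -/
def susFold (acc : Finset (Fin n)) (l : History n Msg Act (Finset (Fin n))) : Finset (Fin n) :=
  l.foldl (fun acc e => match e with | Event.suspect S => S | _ => acc) acc

theorem mem_susFold_union (q : Fin n) (l : History n Msg Act (Finset (Fin n)))
    (acc : Finset (Fin n)) :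
    q ∈ susFold acc (unionHist acc l) ↔ q ∈ acc ∨ ∃ S, Event.suspect S ∈ l ∧ q ∈ S := by
  induction l generalizing acc with
  | nil => simp [unionHist, susFold]
  | cons a l ih =>
    unfold susFold at ih ⊢
    cases a <;> simp [unionHist, ih, or_assoc, or_and_right, exists_or]

theorem susFold_cases (l : History n Msg Act (Finset (Fin n))) (acc : Finset (Fin n)) :
    susFold acc l = acc ∨ Event.suspect (susFold acc l) ∈ l := by
  induction l generalizing acc with
  | nil => simp [susFold]
  | cons a l ih =>
    unfold susFold at ih ⊢
    cases a with
    | suspect S =>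
      right
      rcases ih S with h | h
      · simp [h]
      · exact List.mem_cons_of_mem _ h
    | _ =>
      rcases ih acc with h | h
      · left; simpa using h
      · right; exact List.mem_cons_of_mem _ h

theorem IsRun.mono [DecidableEq Msg] [DecidableEq Act] [DecidableEq FD]
    {r : Run n Msg Act FD} (hr : IsRun r) {p : Fin n}
    {e : Event n Msg Act FD} {m m' : ℕ} (hm : m ≤ m') (h : e ∈ r m p) : e ∈ r m' p := by
  induction hm with
  | refl => exact h
  | step _ ih =>
    rcases hr.2.1 p _ with h' | ⟨e', h'⟩
    · rw [h']; exact ih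
    · rw [h']; exact List.mem_append_left _ ih

theorem suspect_crashed [DecidableEq Msg] [DecidableEq Act]
    {r : StdRun n Msg Act} (hr : IsRun r) (ha : StrongAccuracyRun r) (p : Fin n) (m : ℕ)
    (S : Finset (Fin n)) (h : Event.suspect S ∈ r m p) : ∀ q ∈ S, Event.crash ∈ r m q := by
  induction m with
  | zero => rw [hr.1 p] at h; simp at h
  | succ m ih =>
    intro q hq
    by_cases hS : Event.suspect S ∈ r m p
    · exact hr.mono (Nat.le_succ m) (ih hS q hq)
    · rcases hr.2.1 p m with h' | ⟨e, h'⟩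
      · rw [h'] at h; exact absurd h hS
      · apply ha p q (m+1)
        rw [h', List.mem_append, List.mem_singleton] at h
        rcases h with h | h
        · exact absurd h hS
        · simp [Suspects, h', ← h, hq]

theorem card_eq_of_useful (r : GenRun n Msg Act) (S : Finset (Fin n)) (k : ℕ)
    (h : TUsefulEvent n r S k ∨ TUsefulEvent (n - 1) r S k) : S.card = k := by
  rcases h with ⟨_, h1, h2⟩ | ⟨_, h1, h2⟩ <;> omega

/-- Keep only the reports `(S, |S|)`. -/
def toStd (x : Finset (Fin n) × ℕ) : Finset (Fin n) := if x.1.card = x.2 then x.1 else ∅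

end Helpers

/-- A system with an `n`-useful or `(n-1)`-useful generalized
failure detector can be converted to one with a perfect standard failure
detector; conversely a system with a perfect standard failure detector can be
converted to one with an `n`-useful (hence `(n-1)`-useful) generalized failure
detector; and any `(n-1)`-useful or `n`-useful failure-detector event
`suspect_p(S,k)` has `|S| = k`. -/
theorem useful_FDs_equiv_perfect_FDs
    (n : ℕ) (Msg Act : Type) [DecidableEq Msg] [DecidableEq Act] :
    (∀ R : Set (GenRun n Msg Act), (∀ r ∈ R, IsRun r) →
      ((∀ r ∈ R, GenAccuracyRun r ∧ GenCompletenessRun n r) ∨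
       (∀ r ∈ R, GenAccuracyRun r ∧ GenCompletenessRun (n - 1) r)) →
      ∃ (f : GenRun n Msg Act → StdRun n Msg Act) (R' : Set (StdRun n Msg Act)),
        IsConversion f R R' ∧
        (∀ r' ∈ R', StrongCompletenessRun r' ∧ StrongAccuracyRun r')) ∧
    (∀ R : Set (StdRun n Msg Act), (∀ r ∈ R, IsRun r) →
      (∀ r ∈ R, StrongCompletenessRun r ∧ StrongAccuracyRun r) →
      ∃ (f : StdRun n Msg Act → GenRun n Msg Act) (R' : Set (GenRun n Msg Act)),
        IsConversion f R R' ∧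
        (∀ r' ∈ R', GenAccuracyRun r' ∧ GenCompletenessRun n r' ∧
          GenCompletenessRun (n - 1) r')) ∧
    (∀ (r : GenRun n Msg Act) (S : Finset (Fin n)) (k : ℕ),
      TUsefulEvent n r S k ∨ TUsefulEvent (n - 1) r S k → S.card = k) := by
  refine ⟨?_, ?_, card_eq_of_useful⟩
  · intro R hR hU
    have hU' : ∀ r ∈ R, GenAccuracyRun r ∧ ∀ p, ¬ Faulty r p →
        ∃ m, ∃ S : Finset (Fin n), Event.suspect (S, S.card) ∈ r m p ∧ faultySet r ⊆ S := by
      intro r hr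
      rcases hU with hU | hU
      · refine ⟨(hU r hr).1, fun p hp => ?_⟩
        obtain ⟨m, S, k, h1, h2⟩ := (hU r hr).2 p hp
        have := card_eq_of_useful r S k (Or.inl h2)
        subst this
        exact ⟨m, S, h1, h2.1⟩
      · refine ⟨(hU r hr).1, fun p hp => ?_⟩
        obtain ⟨m, S, k, h1, h2⟩ := (hU r hr).2 p hp
        have := card_eq_of_useful r S k (Or.inr h2)
        subst this
        exact ⟨m, S, h1, h2.1⟩
    have good : GoodHist (fun l : History n Msg Act (Finset (Fin n) × ℕ) =>
        unionHist ∅ (l.map (mapEv toStd))) := goodHist_union.comp (goodHist_map toStd)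
    let f : GenRun n Msg Act → StdRun n Msg Act :=
      fun r m p => unionHist ∅ ((r m p).map (mapEv toStd))
    have hsus : ∀ (r : GenRun n Msg Act) p q m, q ∈ Suspects (f r) p m ↔
        ∃ S : Finset (Fin n), Event.suspect (S, S.card) ∈ r m p ∧ q ∈ S := by
      intro r p q m
      have := mem_susFold_union q ((r m p).map (mapEv toStd)) ∅
      change q ∈ susFold ∅ (unionHist ∅ ((r m p).map (mapEv toStd))) ↔ _
      rw [this]
      simp only [Finset.notMem_empty, false_or, suspect_mem_map]
      constructor
      · rintro ⟨S, ⟨⟨T, k⟩, hT, rfl⟩, hq⟩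
        unfold toStd at hq
        split_ifs at hq with hc
        · simp only at hc hq
          subst hc
          exact ⟨T, hT, hq⟩
        · simp at hq
      · rintro ⟨S, hS, hq⟩
        exact ⟨S, ⟨_, hS, by simp [toStd]⟩, hq⟩
    refine ⟨f, f '' R, ⟨rfl, fun r hr => ⟨good.isRun (hR r hr), fun p m => ⟨m, ?_⟩⟩⟩, ?_⟩
    · exact sublist_of_eq' (good.core_eq (r m p)).symm
    · rintro _ ⟨r, hr, rfl⟩
      have hfr : ∀ q m, Event.crash ∈ f r m q ↔ Event.crash ∈ r m q :=
        fun q m => good.crash_iff (r m q)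
      have hfaulty : ∀ q, Faulty (f r) q ↔ Faulty r q := by
        intro q
        simp only [Faulty, hfr]
      obtain ⟨hacc, hcomp⟩ := hU' r hr
      constructor
      · intro p q hq hp
        rw [hfaulty] at hq hp
        obtain ⟨m, S, hS, hF⟩ := hcomp p hp
        refine ⟨m, fun m' hm' => ?_⟩
        rw [hsus]
        exact ⟨S, (hR r hr).mono hm' hS, hF (by simp [faultySet, hq])⟩
      · intro p q m hq
        rw [hsus] at hq
        obtain ⟨S, hS, hq⟩ := hq
        obtain ⟨S', hsub, hcard, hcr⟩ := hacc p m S _ hS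
        rw [Finset.eq_of_subset_of_card_le hsub hcard.ge] at hcr
        exact (hfr q m).2 (hcr q hq)
  · intro R hR hP
    let c : Finset (Fin n) → Finset (Fin n) × ℕ := fun S => (S, S.card)
    have good := goodHist_map (n := n) (Msg := Msg) (Act := Act) c
    let f : StdRun n Msg Act → GenRun n Msg Act :=
      fun r => shiftRun (∅, 0) (fun m p => (r m p).map (mapEv c))
    refine ⟨f, f '' R, ⟨rfl, fun r hr =>
      ⟨shiftRun_isRun _ (good.isRun (hR r hr)), fun p m => ⟨m + 1, ?_⟩⟩⟩, ?_⟩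
    · have : core (f r (m+1) p) = core (r m p) := good.core_eq (r m p)
      exact sublist_of_eq' this.symm
    · rintro _ ⟨r, hr, rfl⟩
      have hrun := hR r hr
      obtain ⟨hcomp, hacc⟩ := hP r hr
      have hfr : ∀ q m, Event.crash ∈ f r (m+1) q ↔ Event.crash ∈ r m q := by
        intro q m
        simp only [f, shiftRun, List.mem_cons, reduceCtorEq, false_or]
        exact good.crash_iff (r m q)
      have hfaulty : ∀ q, Faulty (f r) q ↔ Faulty r q := by
        intro q
        constructor
        · rintro ⟨m, hm⟩
          cases m with
          | zero => simp [f, shiftRun] at hm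
          | succ m => exact ⟨m, (hfr q m).1 hm⟩
        · rintro ⟨m, hm⟩
          exact ⟨m+1, (hfr q m).2 hm⟩
      have main : ∀ p, ¬ Faulty (f r) p → ∃ m, ∃ S : Finset (Fin n),
          Event.suspect (S, S.card) ∈ f r m p ∧ faultySet (f r) ⊆ S := by
        intro p hp
        rw [hfaulty] at hp
        have hex : ∀ q, ∃ m, Faulty r q → ∀ m' ≥ m, q ∈ Suspects r p m' := by
          intro q
          by_cases hq : Faulty r q
          · obtain ⟨m, hm⟩ := hcomp p q hq hp
            exact ⟨m, fun _ => hm⟩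
          · exact ⟨0, fun h => absurd h hq⟩
        choose M hM using hex
        refine ⟨Finset.univ.sup M + 1, Suspects r p (Finset.univ.sup M), ?_, ?_⟩
        · simp only [f, shiftRun, List.mem_cons, suspect_mem_map]
          rcases susFold_cases (r (Finset.univ.sup M) p) ∅ with h | h
          · left
            have h' : Suspects r p (Finset.univ.sup M) = ∅ := h
            simp [h']
          · right
            exact ⟨_, h, rfl⟩
        · intro q hq
          simp only [faultySet, Finset.mem_filter, Finset.mem_univ, true_and, hfaulty] at hq
          exact hM q hq _ (Finset.le_sup (Finset.mem_univ q))
      have useful : ∀ t, GenCompletenessRun t (f r) := by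
        intro t p hp
        obtain ⟨m, S, h1, h2⟩ := main p hp
        have := p.pos
        exact ⟨m, S, S.card, h1, h2, by omega, le_rfl⟩
      refine ⟨?_, useful _, useful _⟩
      intro p m S k h
      cases m with
      | zero => simp [f, shiftRun] at h
      | succ m =>
        simp only [f, shiftRun, List.mem_cons, suspect_mem_map] at h
        rcases h with h | ⟨T, hT, h⟩
        · simp only [Event.suspect.injEq, Prod.mk.injEq] at h
          obtain ⟨rfl, rfl⟩ := h
          exact ⟨∅, by simp, by simp, by simp⟩
        · simp only [c, Prod.mk.injEq] at h
          obtain ⟨rfl, rfl⟩ := h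
          exact ⟨T, subset_rfl, rfl, fun q hq =>
            (hfr q m).2 (suspect_crashed hrun hacc p m T hT q hq)⟩
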